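/- arXiv:math/0405425 — 4 statements merged into one kernel-verified Lean document; each statement's English description precedes it below -/
import Mathlib

section
/- Let [(Qᵢ,𝒬ᵢ),Tᵢ,(Δᵢ,𝒟ᵢ)], i = 1,2, be two generators, let (f,g) be a transition-preserving map from T₁ to T₂, and let μ be a probability measure on (Q₁,𝒬₁). Then for all n ∈ ℕ and all B₁,…,Bₙ ∈ 𝒟₂, the finite-dimensional marginals satisfy Pₙ^{f_*(μ),T₂}(B₁×⋯×Bₙ) = Pₙ^{μ,T₁}(g⁻¹(B₁)×⋯×g⁻¹(Bₙ)), where f_*(μ) denotes the pushforward of μ under f. -/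
open MeasureTheory ProbabilityTheory
open scoped ENNReal

namespace HiddenSources

variable {Q Δ : Type*}

/-- The iterated integral appearing in the finite-dimensional marginals:
`fdmAux T n x B = ∫_{Q×B₁}⋯∫_{Q×Bₙ} T(x_{n-1}, d(xₙ,yₙ)) ⋯ T(x, d(x₁,y₁))`. -/
noncomputable def fdmAux [MeasurableSpace Q] [MeasurableSpace Δ] (T : Kernel Q (Q × Δ)) :
    (n : ℕ) → Q → (Fin n → Set Δ) → ℝ≥0∞
  | 0, _, _ => 1
  | n + 1, x, B =>
      ∫⁻ p : Q × Δ, Set.indicator (B 0) (fun _ => fdmAux T n p.1 fun i => B i.succ) p.2 ∂(T x)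

/-- The finite-dimensional marginal `Pₙ^{μ,T}(B₁ × ⋯ × Bₙ)` of the observed process of the
generator `T` with initial distribution `μ`. -/
noncomputable def fdm [MeasurableSpace Q] [MeasurableSpace Δ] (T : Kernel Q (Q × Δ))
    (μ : Measure Q) (n : ℕ) (B : Fin n → Set Δ) : ℝ≥0∞ :=
  ∫⁻ x, fdmAux T n x B ∂μ

/-- `P` is the path measure `P^{μ,T}` on `Δ^ℕ`: a probability measure whose cylinder
sets have measure given by the finite-dimensional marginals `Pₙ^{μ,T}`. -/
def IsPathMeasure [MeasurableSpace Q] [MeasurableSpace Δ] (T : Kernel Q (Q × Δ))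
    (μ : Measure Q) (P : Measure (ℕ → Δ)) : Prop :=
  IsProbabilityMeasure P ∧
    ∀ (n : ℕ) (B : Fin n → Set Δ), (∀ i, MeasurableSet (B i)) →
      P {y | ∀ i : Fin n, y i ∈ B i} = fdm T μ n B

/-- `im(G_T)`: the set of stochastic processes (identified with their path measures on
`Δ^ℕ`) generated by `T`, as the initial distribution `μ` ranges over the probability
measures on `Q`. -/
def genSet [MeasurableSpace Q] [MeasurableSpace Δ] (T : Kernel Q (Q × Δ)) :
    Set (Measure (ℕ → Δ)) :=
  {P | ∃ μ : Measure Q, IsProbabilityMeasure μ ∧ IsPathMeasure T μ P}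

/-- `(f, g)` is a transition-preserving map (morphism of generators) from `T₁` to `T₂`:
`f`, `g` are measurable and `T₂(f(x), A × B) = T₁(x, f⁻¹(A) × g⁻¹(B))` for all `x`
and measurable `A`, `B`. -/
def TransitionPreserving {Q₁ Q₂ Δ₁ Δ₂ : Type*}
    [MeasurableSpace Q₁] [MeasurableSpace Q₂] [MeasurableSpace Δ₁] [MeasurableSpace Δ₂]
    (T₁ : Kernel Q₁ (Q₁ × Δ₁)) (T₂ : Kernel Q₂ (Q₂ × Δ₂))
    (f : Q₁ → Q₂) (g : Δ₁ → Δ₂) : Prop :=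
  Measurable f ∧ Measurable g ∧
    ∀ (x : Q₁) (A : Set Q₂) (B : Set Δ₂), MeasurableSet A → MeasurableSet B →
      T₂ (f x) (A ×ˢ B) = T₁ x ((f ⁻¹' A) ×ˢ (g ⁻¹' B))

/-!
Fix a measurable set `C` of outputs. The measure `A ↦ T(x, A × C)` of moving from `x` into `A`
while emitting an output in `C` is a kernel on the states, and the iterated integral defining
`Pₙ` is an iterated integral against such kernels alone. Transition preservation says exactly
that `T₂(f(x), · × C)` is the pushforward under `f` of `T₁(x, · × g⁻¹(C))`, so the change of
variables formula carries `f` through the integrals one at a time. Only rectangles with the side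
`C` fixed are ever measured, so no uniqueness theorem for measures on the product is involved.
-/

section Generator

variable [MeasurableSpace Q] [MeasurableSpace Δ] (T : Kernel Q (Q × Δ))

/-- The kernel `x ↦ T(x, · × C)` on the internal states, giving the (unnormalised) law of the next
state when the output is required to lie in `C`. It is encoded as the state marginal of `T`
restricted to `Q × C`. -/
noncomputable def outputKernel {C : Set Δ} (hC : MeasurableSet C) : Kernel Q Q :=
  (T.restrict (hC.preimage measurable_snd)).fst

theorem outputKernel_apply {C : Set Δ} (hC : MeasurableSet C) (x : Q) {A : Set Q}
    (hA : MeasurableSet A) : outputKernel T hC x A = T x (A ×ˢ C) := by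
  rw [outputKernel, Kernel.fst_apply, Measure.map_apply measurable_fst hA,
    Kernel.restrict_apply' _ _ _ (hA.preimage measurable_fst), Set.prod_eq]

theorem lintegral_outputKernel {C : Set Δ} (hC : MeasurableSet C) (x : Q) {φ : Q → ℝ≥0∞}
    (hφ : Measurable φ) :
    ∫⁻ q, φ q ∂outputKernel T hC x = ∫⁻ p, C.indicator (fun _ => φ p.1) p.2 ∂T x :=
  calc
    ∫⁻ q, φ q ∂outputKernel T hC x = ∫⁻ p in Prod.snd ⁻¹' C, φ p.1 ∂T x := by
      rw [outputKernel, Kernel.lintegral_fst _ _ hφ, Kernel.lintegral_restrict]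
    _ = ∫⁻ p, C.indicator (fun _ => φ p.1) p.2 ∂T x :=
      (lintegral_indicator (hC.preimage measurable_snd) _).symm

theorem measurable_fdmAux {n : ℕ} {B : Fin n → Set Δ} (hB : ∀ i, MeasurableSet (B i)) :
    Measurable fun x => fdmAux T n x B := by
  induction n with
  | zero => exact measurable_const
  | succ n ih =>
    have tail_measurable := ih fun i => hB i.succ
    simpa only [fdmAux, lintegral_outputKernel T (hB 0) _ tail_measurable] using
      tail_measurable.lintegral_kernel (κ := outputKernel T (hB 0))

theorem fdmAux_succ {n : ℕ} {B : Fin (n + 1) → Set Δ} (hB : ∀ i, MeasurableSet (B i)) (x : Q) :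
    fdmAux T (n + 1) x B =
      ∫⁻ q, fdmAux T n q (fun i => B i.succ) ∂outputKernel T (hB 0) x :=
  (lintegral_outputKernel T (hB 0) x (measurable_fdmAux T fun i => hB i.succ)).symm

end Generator

section TransitionPreserving

variable {Q₁ Q₂ Δ₁ Δ₂ : Type*}
  [MeasurableSpace Q₁] [MeasurableSpace Q₂] [MeasurableSpace Δ₁] [MeasurableSpace Δ₂]
  {T₁ : Kernel Q₁ (Q₁ × Δ₁)} {T₂ : Kernel Q₂ (Q₂ × Δ₂)} {f : Q₁ → Q₂} {g : Δ₁ → Δ₂}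

theorem TransitionPreserving.outputKernel_eq_map (hfg : TransitionPreserving T₁ T₂ f g)
    {C : Set Δ₂} (hC : MeasurableSet C) (x : Q₁) :
    outputKernel T₂ hC (f x) = (outputKernel T₁ (hfg.2.1 hC) x).map f := by
  obtain ⟨hf, hg, hT⟩ := hfg
  ext A hA
  rw [Measure.map_apply hf hA, outputKernel_apply T₂ hC _ hA,
    outputKernel_apply T₁ (hg hC) _ (hf hA), hT x A C hA hC]

theorem TransitionPreserving.fdmAux_eq (hfg : TransitionPreserving T₁ T₂ f g) {n : ℕ}
    {B : Fin n → Set Δ₂} (hB : ∀ i, MeasurableSet (B i)) (x : Q₁) :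
    fdmAux T₂ n (f x) B = fdmAux T₁ n x fun i => g ⁻¹' B i := by
  induction n generalizing x with
  | zero => rfl
  | succ n ih =>
    have hB_tail : ∀ i : Fin n, MeasurableSet (B i.succ) := fun i => hB i.succ
    calc
      fdmAux T₂ (n + 1) (f x) B
          = ∫⁻ q, fdmAux T₂ n q (fun i => B i.succ)
              ∂(outputKernel T₁ (hfg.2.1 (hB 0)) x).map f := by
            rw [fdmAux_succ T₂ hB, hfg.outputKernel_eq_map]
      _ = ∫⁻ q, fdmAux T₂ n (f q) (fun i => B i.succ) ∂outputKernel T₁ (hfg.2.1 (hB 0)) x :=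
            lintegral_map (measurable_fdmAux T₂ hB_tail) hfg.1
      _ = ∫⁻ q, fdmAux T₁ n q (fun i => g ⁻¹' B i.succ)
              ∂outputKernel T₁ (hfg.2.1 (hB 0)) x :=
            lintegral_congr (ih hB_tail)
      _ = fdmAux T₁ (n + 1) x fun i => g ⁻¹' B i :=
            (fdmAux_succ T₁ (fun i => hfg.2.1 (hB i)) x).symm

theorem fdm_map_eq_general (hfg : TransitionPreserving T₁ T₂ f g) (μ : Measure Q₁) {n : ℕ}
    {B : Fin n → Set Δ₂} (hB : ∀ i, MeasurableSet (B i)) :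
    fdm T₂ (μ.map f) n B = fdm T₁ μ n fun i => g ⁻¹' B i :=
  calc
    fdm T₂ (μ.map f) n B = ∫⁻ x, fdmAux T₂ n (f x) B ∂μ :=
      lintegral_map (measurable_fdmAux T₂ hB) hfg.1
    _ = fdm T₁ μ n fun i => g ⁻¹' B i := lintegral_congr (hfg.fdmAux_eq hB)

end TransitionPreserving

/-- **Proposition 3.1.** If `(f,g)` is a transition-preserving map from `T₁` to `T₂` and
`μ` is a probability measure on `(Q₁,𝒬₁)`, then
`Pₙ^{f_*(μ),T₂}(B₁ × ⋯ × Bₙ) = Pₙ^{μ,T₁}(g⁻¹(B₁) × ⋯ × g⁻¹(Bₙ))`. -/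
theorem fdm_map_eq {Q₁ Q₂ Δ₁ Δ₂ : Type*}
    [MeasurableSpace Q₁] [MeasurableSpace Q₂] [MeasurableSpace Δ₁] [MeasurableSpace Δ₂]
    (T₁ : Kernel Q₁ (Q₁ × Δ₁)) (T₂ : Kernel Q₂ (Q₂ × Δ₂))
    [IsMarkovKernel T₁] [IsMarkovKernel T₂]
    (f : Q₁ → Q₂) (g : Δ₁ → Δ₂) (hfg : TransitionPreserving T₁ T₂ f g)
    (μ : Measure Q₁) [IsProbabilityMeasure μ]
    (n : ℕ) (B : Fin n → Set Δ₂) (hB : ∀ i, MeasurableSet (B i)) :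
    fdm T₂ (μ.map f) n B = fdm T₁ μ n fun i => g ⁻¹' (B i) :=
  fdm_map_eq_general hfg μ hB

end HiddenSources
end

section
/- Let [(Q,𝒬),T,(Δ,𝒟)] be a generator. Then there exists a smallest σ-subalgebra σ_Q(T) of 𝒬 with the property that for all C ∈ σ_Q(T)⊗𝒟, the function x ↦ T(x,C) is σ_Q(T)-measurable; namely, the intersection of the family of all σ-subalgebras 𝒜 of 𝒬 such that for all C ∈ 𝒜⊗𝒟 the function T(·,C) is 𝒜-measurable, itself has this property. -/
open MeasureTheory ProbabilityTheory
open scoped ENNReal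

namespace HiddenSources

variable {Q Δ : Type*}

/-- A σ-subalgebra `𝒜 ≤ 𝒬` such that `T(·,C)` is `𝒜`-measurable for every
`C ∈ 𝒜 ⊗ 𝒟`. -/
def IsSufficientAlgebra [mQ : MeasurableSpace Q] [mΔ : MeasurableSpace Δ]
    (T : Kernel Q (Q × Δ)) (𝒜 : MeasurableSpace Q) : Prop :=
  𝒜 ≤ mQ ∧ ∀ C : Set (Q × Δ), MeasurableSet[𝒜.prod mΔ] C → Measurable[𝒜] fun x => T x C

/-- `σ_Q(T)`: the smallest σ-subalgebra of `𝒬` such that `T(·,C)` is `σ_Q(T)`-measurable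
for all `C ∈ σ_Q(T) ⊗ 𝒟`, obtained as the intersection of all σ-subalgebras with this
invariance property. -/
def sigmaQ [mQ : MeasurableSpace Q] [mΔ : MeasurableSpace Δ] (T : Kernel Q (Q × Δ)) :
    MeasurableSpace Q :=
  sInf {𝒜 | @IsSufficientAlgebra Q Δ mQ mΔ T 𝒜}

theorem measurableSpace_prod_mono {α β : Type*} {m₁ m₂ : MeasurableSpace α}
    {n₁ n₂ : MeasurableSpace β} (hm : m₁ ≤ m₂) (hn : n₁ ≤ n₂) : m₁.prod n₁ ≤ m₂.prod n₂ :=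
  sup_le_sup (MeasurableSpace.comap_mono hm) (MeasurableSpace.comap_mono hn)

theorem measurable_sInf_iff {α β : Type*} [MeasurableSpace β] {S : Set (MeasurableSpace α)}
    {f : α → β} : Measurable[sInf S] f ↔ ∀ m ∈ S, Measurable[m] f := by
  simp only [measurable_iff_comap_le, le_sInf_iff]

section SufficientAlgebra

variable [mQ : MeasurableSpace Q] [mΔ : MeasurableSpace Δ]

theorem isSufficientAlgebra_self (T : Kernel Q (Q × Δ)) : IsSufficientAlgebra T mQ :=
  ⟨le_rfl, fun _ hC => T.measurable_coe hC⟩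

theorem isSufficientAlgebra_sInf {T : Kernel Q (Q × Δ)} {S : Set (MeasurableSpace Q)}
    (hne : S.Nonempty) (hS : ∀ 𝒜 ∈ S, IsSufficientAlgebra (mQ := mQ) T 𝒜) :
    IsSufficientAlgebra T (sInf S) := by
  obtain ⟨𝒜₀, h𝒜₀⟩ := hne
  refine ⟨(sInf_le h𝒜₀).trans (hS 𝒜₀ h𝒜₀).1, fun C hC => measurable_sInf_iff.2 fun 𝒜 h𝒜 => ?_⟩
  -- Products need not commute with intersections of σ-algebras; this one inclusion suffices.
  have hC𝒜 : MeasurableSet[𝒜.prod mΔ] C := measurableSpace_prod_mono (sInf_le h𝒜) le_rfl C hC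
  exact (hS 𝒜 h𝒜).2 C hC𝒜

theorem sigmaQ_isSufficient_and_smallest_general (T : Kernel Q (Q × Δ)) :
    IsSufficientAlgebra T (sigmaQ T) ∧
      ∀ 𝒜 : MeasurableSpace Q, IsSufficientAlgebra (mQ := mQ) T 𝒜 → sigmaQ (mQ := mQ) T ≤ 𝒜 :=
  ⟨isSufficientAlgebra_sInf ⟨mQ, isSufficientAlgebra_self T⟩ fun _ h𝒜 => h𝒜,
    fun _ h𝒜 => sInf_le h𝒜⟩

end SufficientAlgebra

/-- **Theorem 4.1 (Internal-Event Reduction), existence part.** There exists a smallest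
σ-subalgebra `σ_Q(T)` of `𝒬` such that for all `C ∈ σ_Q(T) ⊗ 𝒟` the function
`T(·,C)` is `σ_Q(T)`-measurable: the intersection `sigmaQ T` of all σ-subalgebras with
this property itself has the property and is a lower bound for all of them. -/
theorem sigmaQ_isSufficient_and_smallest [mQ : MeasurableSpace Q] [mΔ : MeasurableSpace Δ]
    (T : Kernel Q (Q × Δ)) [IsMarkovKernel T] :
    IsSufficientAlgebra T (sigmaQ T) ∧
      ∀ 𝒜 : MeasurableSpace Q, @IsSufficientAlgebra Q Δ mQ mΔ T 𝒜 → @sigmaQ Q Δ mQ mΔ T ≤ 𝒜 :=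
  sigmaQ_isSufficient_and_smallest_general T

end HiddenSources
end

section
/- Let (Q,𝒬) and (Δ,𝒟) be measurable spaces, f: Q → Q and g: Q → Δ measurable maps, and T the deterministic generator T(x, A×B) := 1 if f(x) ∈ A and g(f(x)) ∈ B, else 0. Then for every C ∈ σ(g∘f, g∘f², …)⊗𝒟, the function x ↦ T(x,C) is measurable with respect to σ(g∘f, g∘f², …); consequently σ_Q(T) ⊆ σ(g∘f, g∘f², …). -/
open MeasureTheory ProbabilityTheory
open scoped ENNReal Classical

namespace HiddenSources

variable {Q Δ : Type*}

/-- The σ-algebra `σ(g∘f, g∘f², …)` on `Q` carried by the outputs that a state produces from the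
next step on. The index `k` is shifted by one so that the current output `g x` is excluded. -/
abbrev futureAlgebra [mΔ : MeasurableSpace Δ] (f : Q → Q) (g : Q → Δ) : MeasurableSpace Q :=
  ⨆ k : ℕ, mΔ.comap fun x => g (f^[k + 1] x)

section FutureAlgebra

variable [mΔ : MeasurableSpace Δ]

theorem futureAlgebra_le [mQ : MeasurableSpace Q] {f : Q → Q} {g : Q → Δ}
    (hf : Measurable f) (hg : Measurable g) : futureAlgebra f g ≤ mQ :=
  iSup_le fun k => (hg.comp (hf.iterate (k + 1))).comap_le

theorem measurable_output_iterate_succ (f : Q → Q) (g : Q → Δ) (k : ℕ) :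
    Measurable[futureAlgebra f g] fun x => g (f^[k + 1] x) :=
  measurable_iff_comap_le.2 <| le_iSup (fun k : ℕ => mΔ.comap fun x => g (f^[k + 1] x)) k

theorem measurable_futureAlgebra_iff {α : Type*} {mα : MeasurableSpace α} {f : Q → Q} {g : Q → Δ}
    {u : α → Q} :
    Measurable[mα, futureAlgebra f g] u ↔ ∀ k, Measurable fun a => g (f^[k + 1] (u a)) := by
  simp only [measurable_iff_comap_le, futureAlgebra, MeasurableSpace.comap_iSup, iSup_le_iff,
    MeasurableSpace.comap_comp, Function.comp_def]

-- Precomposition with `f` turns the generator `g ∘ f^[k + 1]` into the generator `g ∘ f^[k + 2]`.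
theorem measurable_self_futureAlgebra (f : Q → Q) (g : Q → Δ) :
    Measurable[futureAlgebra f g, futureAlgebra f g] f :=
  measurable_futureAlgebra_iff.2 fun k => measurable_output_iterate_succ f g (k + 1)

theorem measurable_step_futureAlgebra (f : Q → Q) (g : Q → Δ) :
    Measurable[futureAlgebra f g, (futureAlgebra f g).prod mΔ] fun x => (f x, g (f x)) :=
  Measurable.prodMk (m := futureAlgebra f g) (measurable_self_futureAlgebra f g)
    (measurable_output_iterate_succ f g 0)

end FutureAlgebra

theorem eq_dirac_of_apply_prod {α β : Type*} [MeasurableSpace α] [MeasurableSpace β]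
    {μ : Measure (α × β)} {a : α} {b : β}
    (h : ∀ (A : Set α) (B : Set β), MeasurableSet A → MeasurableSet B →
      μ (A ×ˢ B) = if a ∈ A ∧ b ∈ B then 1 else 0) :
    μ = Measure.dirac (a, b) := by
  have : IsProbabilityMeasure μ := ⟨by simpa using h Set.univ Set.univ .univ .univ⟩
  refine Measure.ext_prod fun {A B} hA hB => ?_
  rw [h A B hA hB, Measure.dirac_apply' _ (hA.prod hB)]
  simp [Set.indicator_apply]

theorem measurable_dirac_apply {α β : Type*} {mα : MeasurableSpace α} [MeasurableSpace β]
    {φ : α → β} {C : Set β} (hC : MeasurableSet C) (hφC : MeasurableSet (φ ⁻¹' C)) :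
    Measurable fun a => Measure.dirac (φ a) C := by
  simp only [Measure.dirac_apply' _ hC]
  exact measurable_one.indicator hφC

theorem isSufficientAlgebra_of_eq_dirac {𝒜 : MeasurableSpace Q} [mQ : MeasurableSpace Q]
    [mΔ : MeasurableSpace Δ] {T : Kernel Q (Q × Δ)} {φ : Q → Q × Δ}
    (hT : ∀ x, T x = Measure.dirac (φ x)) (h𝒜 : 𝒜 ≤ mQ) (hφ : Measurable[𝒜, 𝒜.prod mΔ] φ) :
    IsSufficientAlgebra T 𝒜 := by
  refine ⟨h𝒜, fun C hC => ?_⟩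
  have prod_le : 𝒜.prod mΔ ≤ mQ.prod mΔ := sup_le_sup (MeasurableSpace.comap_mono h𝒜) le_rfl
  simp only [hT]
  exact measurable_dirac_apply (prod_le C hC) (hφ hC)

/-- **Theorem 4.2, first inclusion.** For the deterministic generator
`T(x, A × B) = 1` if `f(x) ∈ A` and `g(f(x)) ∈ B`, else `0`: for every
`C ∈ σ(g∘f, g∘f², …) ⊗ 𝒟`, the function `T(·,C)` is `σ(g∘f, g∘f², …)`-measurable;
consequently `σ_Q(T) ⊆ σ(g∘f, g∘f², …)`. -/
theorem sigmaQ_deterministic_le [mQ : MeasurableSpace Q] [mΔ : MeasurableSpace Δ]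
    (f : Q → Q) (g : Q → Δ) (hf : Measurable f) (hg : Measurable g)
    (T : Kernel Q (Q × Δ)) [IsMarkovKernel T]
    (hT : ∀ (x : Q) (A : Set Q) (B : Set Δ), MeasurableSet A → MeasurableSet B →
      T x (A ×ˢ B) = if f x ∈ A ∧ g (f x) ∈ B then 1 else 0) :
    (∀ C : Set (Q × Δ),
        MeasurableSet[(⨆ k : ℕ, mΔ.comap fun x => g (f^[k + 1] x)).prod mΔ] C →
        Measurable[⨆ k : ℕ, mΔ.comap fun x => g (f^[k + 1] x)] fun x => T x C) ∧
      sigmaQ T ≤ ⨆ k : ℕ, mΔ.comap fun x => g (f^[k + 1] x) := by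
  have hdirac (x : Q) : T x = Measure.dirac (f x, g (f x)) := eq_dirac_of_apply_prod (hT x)
  have hsuff : IsSufficientAlgebra T (futureAlgebra f g) :=
    isSufficientAlgebra_of_eq_dirac hdirac (futureAlgebra_le hf hg)
      (measurable_step_futureAlgebra f g)
  exact ⟨hsuff.2, sInf_le hsuff⟩

end HiddenSources
end

section
/- Let (Q,𝒬) and (Δ,𝒟) be measurable spaces, f: Q → Q and g: Q → Δ measurable maps, and T the deterministic generator T(x, A×B) := 1 if f(x) ∈ A and g(f(x)) ∈ B, else 0. Then for every k ≥ 1, the σ-algebra σ(g∘fᵏ) generated by the single map g∘fᵏ is contained in σ_Q(T); consequently σ(g∘f, g∘f², …) ⊆ σ_Q(T). -/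
/-!
A σ-algebra `𝒜` that is sufficient for a deterministic generator makes every event
`f ⁻¹' A ∩ h ⁻¹' B` with `A ∈ 𝒜` measurable, since it is the set where the transition probability
of `A ×ˢ B` equals `1`. Taking one factor to be the whole space, `f` is measurable from `𝒜` to
`𝒜` and `h` is `𝒜`-measurable, hence so is `h ∘ f^[k]`. As `σ_Q(T)` is itself sufficient, this
applies to it; in the theorem, `h = g ∘ f`.
-/

open MeasureTheory ProbabilityTheory
open scoped ENNReal Classical

namespace HiddenSources

variable {Q Δ : Type*}

/-- Deterministic dynamics: the generator `T` moves from state `x` to `f x` while emitting `h x`.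
The law of the pair is prescribed on rectangles. The output is a function of the state before the
transition, so that reading it off the new state by `g` is the case `h = g ∘ f`. -/
def IsDeterministicGenerator [MeasurableSpace Q] [MeasurableSpace Δ] (T : Kernel Q (Q × Δ))
    (f : Q → Q) (h : Q → Δ) : Prop :=
  ∀ (x : Q) (A : Set Q) (B : Set Δ), MeasurableSet A → MeasurableSet B →
    T x (A ×ˢ B) = if f x ∈ A ∧ h x ∈ B then 1 else 0

theorem sigmaQ_le {𝒜 : MeasurableSpace Q} [mQ : MeasurableSpace Q] [MeasurableSpace Δ]
    {T : Kernel Q (Q × Δ)} (h𝒜 : IsSufficientAlgebra (mQ := mQ) T 𝒜) : sigmaQ T ≤ 𝒜 :=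
  sInf_le h𝒜

theorem isSufficientAlgebra_sigmaQ [mQ : MeasurableSpace Q] [mΔ : MeasurableSpace Δ]
    (T : Kernel Q (Q × Δ)) : IsSufficientAlgebra T (sigmaQ T) := by
  have isSufficientAlgebra_self : IsSufficientAlgebra T mQ :=
    ⟨le_rfl, fun C hC => T.measurable_coe hC⟩
  refine ⟨sigmaQ_le isSufficientAlgebra_self, fun C hC S hS => ?_⟩
  refine MeasurableSpace.measurableSet_sInf.2 fun 𝒜 h𝒜 => h𝒜.2 C ?_ hS
  have prod_le : (sigmaQ (mQ := mQ) T).prod mΔ ≤ 𝒜.prod mΔ :=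
    sup_le_sup_right (MeasurableSpace.comap_mono (sigmaQ_le (mQ := mQ) h𝒜)) _
  exact prod_le C hC

namespace IsDeterministicGenerator

variable {𝒜 : MeasurableSpace Q} [MeasurableSpace Q] [MeasurableSpace Δ]
  {T : Kernel Q (Q × Δ)} {f : Q → Q} {h : Q → Δ}

theorem setOf_apply_prod_eq_one (hT : IsDeterministicGenerator T f h) {A : Set Q} {B : Set Δ}
    (hA : MeasurableSet A) (hB : MeasurableSet B) :
    {x | T x (A ×ˢ B) = 1} = f ⁻¹' A ∩ h ⁻¹' B := by
  ext x
  simp [hT x A B hA hB]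

theorem measurableSet_preimage_inter_preimage (hT : IsDeterministicGenerator T f h)
    (h𝒜 : IsSufficientAlgebra T 𝒜) {A : Set Q} {B : Set Δ}
    (hA : MeasurableSet[𝒜] A) (hB : MeasurableSet B) :
    MeasurableSet[𝒜] (f ⁻¹' A ∩ h ⁻¹' B) := by
  rw [← hT.setOf_apply_prod_eq_one (h𝒜.1 A hA) hB]
  exact h𝒜.2 _ (hA.prod hB) (measurableSet_singleton 1)

theorem measurable_transition (hT : IsDeterministicGenerator T f h)
    (h𝒜 : IsSufficientAlgebra T 𝒜) : Measurable[𝒜, 𝒜] f := fun A hA => by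
  simpa using hT.measurableSet_preimage_inter_preimage h𝒜 hA MeasurableSet.univ

theorem measurable_output (hT : IsDeterministicGenerator T f h)
    (h𝒜 : IsSufficientAlgebra T 𝒜) : Measurable[𝒜] h := fun B hB => by
  simpa using hT.measurableSet_preimage_inter_preimage h𝒜 (@MeasurableSet.univ Q 𝒜) hB

theorem measurable_output_comp_iterate (hT : IsDeterministicGenerator T f h)
    (h𝒜 : IsSufficientAlgebra T 𝒜) (k : ℕ) : Measurable[𝒜] (h ∘ f^[k]) :=
  (hT.measurable_output h𝒜).comp ((hT.measurable_transition h𝒜).iterate k)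

end IsDeterministicGenerator

theorem le_sigmaQ_deterministic_general [MeasurableSpace Q] [mΔ : MeasurableSpace Δ]
    {T : Kernel Q (Q × Δ)} {f : Q → Q} {h : Q → Δ} (hT : IsDeterministicGenerator T f h) (k : ℕ) :
    mΔ.comap (h ∘ f^[k]) ≤ sigmaQ T :=
  (hT.measurable_output_comp_iterate (isSufficientAlgebra_sigmaQ T) k).comap_le

/-- **Theorem 4.2, second inclusion.** For the deterministic generator
`T(x, A × B) = 1` if `f(x) ∈ A` and `g(f(x)) ∈ B`, else `0`: for every `k ≥ 1` the
σ-algebra `σ(g∘fᵏ)` is contained in `σ_Q(T)`; consequently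
`σ(g∘f, g∘f², …) ⊆ σ_Q(T)`. -/
theorem le_sigmaQ_deterministic [mQ : MeasurableSpace Q] [mΔ : MeasurableSpace Δ]
    (f : Q → Q) (g : Q → Δ) (hf : Measurable f) (hg : Measurable g)
    (T : Kernel Q (Q × Δ)) [IsMarkovKernel T]
    (hT : ∀ (x : Q) (A : Set Q) (B : Set Δ), MeasurableSet A → MeasurableSet B →
      T x (A ×ˢ B) = if f x ∈ A ∧ g (f x) ∈ B then 1 else 0) :
    (∀ k : ℕ, 1 ≤ k → (mΔ.comap fun x => g (f^[k] x)) ≤ sigmaQ T) ∧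
      (⨆ k : ℕ, mΔ.comap fun x => g (f^[k + 1] x)) ≤ sigmaQ T := by
  have comap_le (k : ℕ) : (mΔ.comap fun x => g (f^[k + 1] x)) ≤ sigmaQ T := by
    simpa only [Function.comp_def, Function.iterate_succ_apply'] using
      le_sigmaQ_deterministic_general (h := g ∘ f) hT k
  exact ⟨fun | k + 1, _ => comap_le k, iSup_le comap_le⟩

end HiddenSources
end
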